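/- arXiv:2412.00764 — 2 statements merged into one kernel-verified Lean document; each statement's English description precedes it below -/
import Mathlib

section
/- For every z > 0 and every n ≥ 1, the endpoint evaluations of consecutive monic orthogonal polynomials for the weight e^{−x⁴} on [−z, z] satisfy P_n(z)·P_{n−1}(z)·e^{−z⁴} = [ n/2 − 2γ_n·(γ_{n+1} + γ_n + γ_{n−1}) ]·h_{n−1}. -/
open Polynomial in
/-- The linear functional `p ↦ ∫ p(x) e^{-x⁴} dx` over `[-z, z]`. -/
noncomputable def freudL (z : ℝ) (p : ℝ[X]) : ℝ :=
  ∫ x in (-z)..z, p.eval x * Real.exp (-x ^ 4)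

open Polynomial in
theorem freud_int (z : ℝ) (p : ℝ[X]) :
    IntervalIntegrable (fun x => p.eval x * Real.exp (-x ^ 4)) MeasureTheory.volume (-z) z := by
  apply Continuous.intervalIntegrable
  have := p.continuous
  fun_prop

open Polynomial in
theorem freudL_add (z : ℝ) (p q : ℝ[X]) : freudL z (p + q) = freudL z p + freudL z q := by
  unfold freudL
  rw [← intervalIntegral.integral_add (freud_int z p) (freud_int z q)]
  congr 1
  ext x
  simp [add_mul]

open Polynomial in
theorem freudL_C (z c : ℝ) (p : ℝ[X]) : freudL z (C c * p) = c * freudL z p := by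
  unfold freudL
  rw [← intervalIntegral.integral_const_mul]
  congr 1
  ext x
  simp [mul_assoc]

open Polynomial in
theorem freudL_orth (z : ℝ) (P : ℕ → ℝ[X]) (hmonic : ∀ n, (P n).Monic)
    (hdeg : ∀ n, (P n).natDegree = n)
    (horth : ∀ m n, m ≠ n → freudL z (P m * P n) = 0) (n : ℕ) :
    ∀ k, k ≤ n → ∀ q : ℝ[X], q.degree < (k : WithBot ℕ) → freudL z (P n * q) = 0 := by
  intro k
  induction k with
  | zero =>
    intro _ q hq
    have : q = 0 := by
      ext i
      exact (degree_lt_iff_coeff_zero q 0).1 (by exact_mod_cast hq) i (Nat.zero_le i)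
    simp [this, freudL]
  | succ k ih =>
    intro hk q hq
    have hq' := (degree_lt_iff_coeff_zero q (k+1)).1 (by exact_mod_cast hq)
    have h1 : freudL z (P n * (q + C (-q.coeff k) * P k)) = 0 := by
      apply ih (by omega)
      rw [degree_lt_iff_coeff_zero]
      intro i hi
      rw [coeff_add, coeff_C_mul]
      rcases Nat.eq_or_lt_of_le hi with rfl | hlt
      · have : (P k).coeff k = 1 := by
          have := (hmonic k).coeff_natDegree
          rwa [hdeg] at this
        rw [this]; ring
      · rw [hq' i hlt, coeff_eq_zero_of_natDegree_lt (p := P k) (by rw [hdeg]; exact hlt)]; ring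
    have h2 : P n * (q + C (-q.coeff k) * P k) = P n * q + C (-q.coeff k) * (P n * P k) := by ring
    rw [h2, freudL_add, freudL_C, horth n k (by omega)] at h1
    linarith

open Polynomial in
theorem freudL_parts (z : ℝ) (p : ℝ[X]) :
    freudL z (derivative p + C (-4) * (X ^ 3 * p)) =
      p.eval z * Real.exp (-z ^ 4) - p.eval (-z) * Real.exp (-z ^ 4) := by
  have key := intervalIntegral.integral_eq_sub_of_hasDerivAt
    (f := fun x => p.eval x * Real.exp (-x ^ 4))
    (f' := fun x => (derivative p + C (-4) * (X ^ 3 * p)).eval x * Real.exp (-x ^ 4))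
    (a := -z) (b := z) (fun x _ => by
      have h1 := p.hasDerivAt x
      have h2 := ((hasDerivAt_pow 4 x).neg).exp
      refine (h1.mul h2).congr_deriv ?_
      simp
      ring) (freud_int z _)
  unfold freudL
  rw [key]
  have : (-z) ^ 4 = z ^ 4 := by ring
  simp only [this]

open Polynomial in
/-- Endpoint evaluation identity for consecutive monic orthogonal polynomials for
the weight `e^{-x⁴}` on `[-z, z]`:
`P_n(z)·P_{n-1}(z)·e^{-z⁴} = (n/2 - 2γ_n(γ_{n+1}+γ_n+γ_{n-1}))·h_{n-1}`. -/
theorem truncated_freud_endpoint_product (z : ℝ) (hz : 0 < z)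
    (P : ℕ → Polynomial ℝ) (γ h : ℕ → ℝ)
    (hmonic : ∀ n, (P n).Monic)
    (hdeg : ∀ n, (P n).natDegree = n)
    (horth : ∀ m n, m ≠ n →
      ∫ x in (-z)..z, (P m).eval x * (P n).eval x * Real.exp (-x ^ 4) = 0)
    (hh : ∀ n, h n = ∫ x in (-z)..z, ((P n).eval x) ^ 2 * Real.exp (-x ^ 4))
    (hhpos : ∀ n, 0 < h n)
    (hP0 : P 0 = 1) (hP1 : P 1 = Polynomial.X)
    (hrec : ∀ n, Polynomial.X * P (n + 1) = P (n + 2) + Polynomial.C (γ (n + 1)) * P n)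
    (hγ0 : γ 0 = 0)
    (hγ : ∀ n, γ (n + 1) = h (n + 1) / h n)
    (n : ℕ) (hn : 1 ≤ n) :
    (P n).eval z * (P (n - 1)).eval z * Real.exp (-z ^ 4) =
      ((n : ℝ) / 2 - 2 * γ n * (γ (n + 1) + γ n + γ (n - 1))) * h (n - 1) := by
  obtain ⟨m, rfl⟩ : ∃ m, n = m + 1 := ⟨n - 1, by omega⟩
  simp only [Nat.add_sub_cancel]
  have ho : ∀ m n, m ≠ n → freudL z (P m * P n) = 0 := by
    intro m n hmn
    have := horth m n hmn
    unfold freudL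
    simpa only [eval_mul] using this
  have hs : ∀ n, freudL z (P n * P n) = h n := by
    intro n
    rw [hh n]
    unfold freudL
    simp only [eval_mul, pow_two]
  have hLo := freudL_orth z P hmonic hdeg ho
  have hpar : ∀ n, (P n).eval (-z) = (-1) ^ n * (P n).eval z ∧
      (P (n+1)).eval (-z) = (-1) ^ (n+1) * (P (n+1)).eval z := by
    intro n
    induction n with
    | zero => simp [hP0, hP1]
    | succ k ih =>
      refine ⟨ih.2, ?_⟩
      have e1 := congrArg (eval z) (hrec k)
      have e2 := congrArg (eval (-z)) (hrec k)
      simp only [eval_mul, eval_add, eval_X, eval_C] at e1 e2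
      rw [ih.1, ih.2] at e2
      have : (P (k+1+1)).eval (-z) = -z * ((-1) ^ (k + 1) * eval z (P (k + 1)))
        - γ (k + 1) * ((-1) ^ k * eval z (P k)) := by linarith
      rw [this, show eval z (P (k+1+1)) = z * eval z (P (k + 1)) - γ (k + 1) * eval z (P k) by
        linarith]
      ring
  have hstep : X * P m = P (m+1) + C (γ m) * P (m-1) := by
    cases m with
    | zero => simp [hP0, hP1, hγ0]
    | succ k => exact hrec k
  have hγm : γ (m+1) * h m = h (m+1) := by
    rw [hγ]; exact div_mul_cancel₀ _ (hhpos m).ne'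
  have hγm' : γ m * (γ m * h (m-1)) = γ m * h m := by
    cases m with
    | zero => simp [hγ0]
    | succ k =>
      have : γ (k+1) * h k = h (k+1) := by
        rw [hγ]; exact div_mul_cancel₀ _ (hhpos k).ne'
      simp [this]
  have hcoef : ∀ k, (P k).coeff k = 1 := by
    intro k
    have := (hmonic k).coeff_natDegree
    rwa [hdeg] at this
  have hz0 : ∀ k i, k < i → (P k).coeff i = 0 := by
    intro k i hi
    exact coeff_eq_zero_of_natDegree_lt (by rw [hdeg]; exact hi)
  -- first derivative term
  have d1 : freudL z (P m * derivative (P (m+1))) = (m + 1) * h m := by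
    have h1 : freudL z (P m * (derivative (P (m+1)) + C (-((m:ℝ)+1)) * P m)) = 0 := by
      apply hLo m m le_rfl
      rw [degree_lt_iff_coeff_zero]
      intro i hi
      rw [coeff_add, coeff_C_mul, coeff_derivative]
      rcases Nat.eq_or_lt_of_le hi with rfl | hlt
      · rw [hcoef, hcoef]; ring
      · rw [hz0 _ _ hlt, hz0 _ _ (Nat.succ_lt_succ hlt)]; ring
    rw [show P m * (derivative (P (m+1)) + C (-((m:ℝ)+1)) * P m) =
      P m * derivative (P (m+1)) + C (-((m:ℝ)+1)) * (P m * P m) by ring,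
      freudL_add, freudL_C, hs] at h1
    linarith
  have d2 : freudL z (P (m+1) * derivative (P m)) = 0 := by
    apply hLo (m+1) (m+1) le_rfl
    rw [degree_lt_iff_coeff_zero]
    intro i hi
    rw [coeff_derivative, hz0 _ _ (by omega)]; ring
  have d3 : freudL z (X ^ 3 * (P (m+1) * P m)) = γ (m+1) * (γ (m+2) + γ (m+1) + γ m) * h m := by
    have e : X ^ 3 * (P (m+1) * P m) =
        P (m+3) * P (m+1) + (C (γ m) * (P (m+3) * P (m-1)) +
        (C (γ (m+2) + γ (m+1)) * (P (m+1) * P (m+1)) +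
        (C ((γ (m+2) + γ (m+1)) * γ m + γ (m+1) * γ m) * (P (m+1) * P (m-1)) +
        C (γ (m+1) * γ m * γ m) * (P (m-1) * P (m-1))))) := by
      have r1 := hrec m
      have r2 := hrec (m+1)
      have e2 : X ^ 2 * P (m+1) = P (m+3) + C (γ (m+2)) * P (m+1) +
          C (γ (m+1)) * (P (m+1) + C (γ m) * P (m-1)) := by
        rw [← hstep]
        linear_combination X * r1 + r2
      rw [show X ^ 3 * (P (m+1) * P m) = (X ^ 2 * P (m+1)) * (X * P m) by ring, e2, hstep]
      simp only [C_add, C_mul]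
      ring
    rw [e]
    simp only [freudL_add, freudL_C, hs]
    rw [ho (m+3) (m+1) (by omega), ho (m+3) (m-1) (by omega), ho (m+1) (m-1) (by omega)]
    linear_combination -(γ (m+2) + γ (m+1)) * hγm + γ (m+1) * hγm'
  have hp := freudL_parts z (P (m+1) * P m)
  rw [freudL_add, freudL_C, d3, derivative_mul, freudL_add, mul_comm (derivative _) (P m), d1, d2,
    eval_mul, eval_mul, (hpar m).1, (hpar m).2] at hp
  have hsg : ((-1:ℝ)) ^ (m+1) * (-1) ^ m = -1 := by
    rw [pow_succ, mul_right_comm, ← mul_pow]; simp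
  push_cast
  linear_combination (-1/2) * hp
    + (1/2) * eval z (P (m+1)) * eval z (P m) * Real.exp (-z^4) * hsg
end

section
/- For z > 0, let P_n(·; z) be the monic orthogonal polynomials for the weight e^{−x⁴} on [−z, z] with recurrence coefficients γ_n(z), assume the coefficients of P_n(·; z) are differentiable in z, and let x_{n,k}(z) ∈ (−z, z) be a differentiable function of z such that x_{n,k}(z) is a simple zero of P_n(·; z) (i.e. P_n(x_{n,k}(z); z) = 0 and ∂_x P_n(x_{n,k}(z); z) ≠ 0) and 𝒜_n(x_{n,k}(z); z) ≠ 0. Then the zero evolves according to the differential equation x′_{n,k}(z) = (x_{n,k}(z)/z)·[ 𝒜_n(z; z) / 𝒜_n(x_{n,k}(z); z) ], where 𝒜_n(z; z) = γ_{n+1}(γ_{n+2} + γ_{n+1} + γ_n) + γ_n(γ_{n+1} + γ_n + γ_{n−1}) − n/2 − 1/4. -/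
open Polynomial in
/-- The moment functional of the truncated Freud weight. -/
noncomputable def tfL (z : ℝ) : Polynomial ℝ →ₗ[ℝ] ℝ where
  toFun q := ∫ x in (-z)..z, q.eval x * Real.exp (-x ^ 4)
  map_add' p q := by
    simp only [Polynomial.eval_add, add_mul]
    apply intervalIntegral.integral_add <;>
      exact Continuous.intervalIntegrable (by fun_prop) _ _
  map_smul' c p := by
    simp only [Polynomial.eval_smul, smul_eq_mul, mul_assoc, RingHom.id_apply]
    exact intervalIntegral.integral_const_mul _ _

theorem tfL_apply (z : ℝ) (q : Polynomial ℝ) :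
    tfL z q = ∫ x in (-z)..z, q.eval x * Real.exp (-x ^ 4) := rfl

theorem tfL_C_mul (z c : ℝ) (q : Polynomial ℝ) :
    tfL z (Polynomial.C c * q) = c * tfL z q := by
  rw [← Polynomial.smul_eq_C_mul, map_smul, smul_eq_mul]

theorem tfL_derivative (z : ℝ) (q : Polynomial ℝ) :
    tfL z (Polynomial.derivative q) =
      (q.eval z - q.eval (-z)) * Real.exp (-z ^ 4) + 4 * tfL z (Polynomial.X ^ 3 * q) := by
  have key : ∫ x in (-z)..z, ((Polynomial.derivative q).eval x * Real.exp (-x ^ 4)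
      - 4 * ((Polynomial.X ^ 3 * q).eval x * Real.exp (-x ^ 4))) =
      q.eval z * Real.exp (-z ^ 4) - q.eval (-z) * Real.exp (-(-z) ^ 4) := by
    apply intervalIntegral.integral_eq_sub_of_hasDerivAt
      (f := fun x => q.eval x * Real.exp (-x ^ 4))
    · intro x _
      have h1 := q.hasDerivAt x
      have h2 : HasDerivAt (fun x : ℝ => Real.exp (-x ^ 4)) _ x :=
        ((hasDerivAt_pow 4 x).neg).exp
      refine (h1.mul h2).congr_deriv ?_
      simp only [Polynomial.eval_mul, Polynomial.eval_pow, Polynomial.eval_X, Nat.cast_ofNat,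
        Nat.add_one_sub_one, Pi.neg_apply]
      ring
    · exact Continuous.intervalIntegrable (by fun_prop) _ _
  rw [intervalIntegral.integral_sub, intervalIntegral.integral_const_mul,
    ← tfL_apply, ← tfL_apply] at key
  · have : (-z) ^ 4 = z ^ 4 := by ring
    rw [this] at key
    linarith
  · exact Continuous.intervalIntegrable (by fun_prop) _ _
  · exact Continuous.intervalIntegrable (by fun_prop) _ _

theorem tfL_hasDerivAt (z : ℝ) (q : Polynomial ℝ) :
    HasDerivAt (fun s => tfL s q) ((q.eval z + q.eval (-z)) * Real.exp (-z ^ 4)) z := by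
  have hc : Continuous (fun x : ℝ => q.eval x * Real.exp (-x ^ 4)) := by fun_prop
  have hF : ∀ s, HasDerivAt (fun s => ∫ x in (0 : ℝ)..s, q.eval x * Real.exp (-x ^ 4))
      (q.eval s * Real.exp (-s ^ 4)) s := fun s =>
    intervalIntegral.integral_hasDerivAt_right (hc.intervalIntegrable _ _)
      (hc.stronglyMeasurableAtFilter _ _) hc.continuousAt
  have h2 := (hF z).sub ((hF (-z)).comp z (hasDerivAt_neg z))
  have hfun : (fun s => tfL s q) = (fun s => ∫ x in (0 : ℝ)..s, q.eval x * Real.exp (-x ^ 4)) -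
      (fun s => ∫ x in (0 : ℝ)..s, q.eval x * Real.exp (-x ^ 4)) ∘ Neg.neg := by
    funext s
    simp only [tfL_apply, Pi.sub_apply, Function.comp]
    rw [intervalIntegral.integral_interval_sub_left] <;> exact hc.intervalIntegrable _ _
  rw [hfun]
  refine h2.congr_deriv ?_
  have : (-z) ^ 4 = z ^ 4 := by ring
  rw [this]; ring

theorem tfL_orth (z : ℝ) (p : ℕ → Polynomial ℝ) (hm : ∀ n, (p n).Monic)
    (hd : ∀ n, (p n).natDegree = n) (ho : ∀ m n, m ≠ n → tfL z (p m * p n) = 0) (n : ℕ) :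
    ∀ N ≤ n, ∀ q : Polynomial ℝ, q.degree < N → tfL z (p n * q) = 0 := by
  intro N
  induction N with
  | zero =>
    intro _ q hq
    have : q = 0 := by simpa using hq
    simp [this]
  | succ N ih =>
    intro hN q hq
    have h1 : tfL z (p n * (q - Polynomial.C (q.coeff N) * p N)) = 0 := by
      apply ih (by omega)
      rw [Polynomial.degree_lt_iff_coeff_zero] at hq ⊢
      intro m hmN
      rw [Polynomial.coeff_sub, Polynomial.coeff_C_mul]
      rcases eq_or_lt_of_le hmN with rfl | hlt
      · have := (hm N).coeff_natDegree
        rw [hd] at this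
        simp [this]
      · rw [hq m hlt, Polynomial.coeff_eq_zero_of_natDegree_lt (p := p N) (by rw [hd]; exact hlt)]
        simp
    have h2 : p n * (q - Polynomial.C (q.coeff N) * p N) =
      p n * q - Polynomial.C (q.coeff N) * (p n * p N) := by ring
    rw [h2, map_sub, tfL_C_mul, ho n N (by omega)] at h1
    simpa using h1

/-- All the fixed-`z` algebra. -/
theorem tf_fixed (z : ℝ) (p : ℕ → Polynomial ℝ) (g h : ℕ → ℝ) (hm : ∀ n, (p n).Monic)
    (hd : ∀ n, (p n).natDegree = n) (ho : ∀ m n, m ≠ n → tfL z (p m * p n) = 0)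
    (hh : ∀ n, tfL z (p n * p n) = h n) (hpos : ∀ n, 0 < h n)
    (hP0 : p 0 = 1) (hP1 : p 1 = Polynomial.X)
    (hrec : ∀ n, Polynomial.X * p (n + 1) = p (n + 2) + Polynomial.C (g (n + 1)) * p n)
    (hg0 : g 0 = 0) (hg : ∀ n, g (n + 1) = h (n + 1) / h n) (n : ℕ) :
    ((p (n+1)).eval (-z)) ^ 2 = ((p (n+1)).eval z) ^ 2 ∧
    tfL z (Polynomial.X * (p (n+1) * p (n+1))) = 0 ∧
    tfL z (Polynomial.X ^ 2 * (p (n+1) * p (n+1))) = h (n+1) * (g (n+2) + g (n+1)) ∧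
    2 * z * ((p (n+1)).eval z) ^ 2 * Real.exp (-z ^ 4) =
      h (n+1) * (1 + 2 * (n+1) - 4 * (g (n + 2) * (g (n + 3) + g (n + 2) + g (n+1))
        + g (n+1) * (g (n + 2) + g (n+1) + g n))) := by
  have hgm : ∀ k, h (k+1) = g (k+1) * h k := fun k => by
    rw [hg]; field_simp [(hpos k).ne']
  have hpar : ∀ k, (p k).eval (-z) = (-1) ^ k * (p k).eval z ∧
      (p (k+1)).eval (-z) = (-1) ^ (k+1) * (p (k+1)).eval z := by
    intro k
    induction k with
    | zero => simp [hP0, hP1]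
    | succ k ih =>
      refine ⟨ih.2, ?_⟩
      have e1 := congrArg (Polynomial.eval z) (hrec k)
      have e2 := congrArg (Polynomial.eval (-z)) (hrec k)
      simp only [Polynomial.eval_mul, Polynomial.eval_add, Polynomial.eval_X,
        Polynomial.eval_C] at e1 e2
      rw [ih.1, ih.2] at e2
      have : (p (k+1+1)).eval z = z * (p (k+1)).eval z - g (k+1) * (p k).eval z := by linarith
      rw [this]
      have : (p (k+1+1)).eval (-z) = -z * ((-1) ^ (k + 1) * (p (k+1)).eval z)
        - g (k+1) * ((-1) ^ k * (p k).eval z) := by linarith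
      rw [this]; ring
  have hsq : ((p (n+1)).eval (-z)) ^ 2 = ((p (n+1)).eval z) ^ 2 := by
    rw [(hpar n).2, mul_pow, ← pow_mul, mul_comm (n+1) 2, pow_mul]; simp
  have hX4 : tfL z (Polynomial.X ^ 4 * (p (n+1) * p (n+1))) =
      h (n+1) * (g (n + 2) * (g (n + 3) + g (n + 2) + g (n+1))
        + g (n+1) * (g (n + 2) + g (n+1) + g n)) := by
    cases n with
    | zero =>
      have e : Polynomial.X ^ 4 * (p (0+1) * p (0+1)) =
          p 3 * p 3 + Polynomial.C (2 * (g 2 + g 1)) * (p 3 * p 1)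
          + Polynomial.C ((g 2 + g 1) ^ 2) * (p 1 * p 1) := by
        have e1 : Polynomial.X ^ 2 * p 1 = p 3 + Polynomial.C (g 2 + g 1) * p 1 := by
          have a := hrec 0
          have b := hrec 1
          simp only [zero_add, Nat.reduceAdd] at a b
          rw [pow_two, mul_assoc, a, mul_add, b, hP0, hP1, map_add]; ring
        calc _ = (Polynomial.X ^ 2 * p 1) * (Polynomial.X ^ 2 * p 1) := by ring_nf
          _ = _ := by rw [e1]; simp only [map_mul, map_add, map_pow, map_ofNat]; ring
      rw [e, map_add, map_add, tfL_C_mul, tfL_C_mul, ho 3 1 (by norm_num), hh, hh]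
      have a := hgm 1
      have b := hgm 2
      simp only [Nat.reduceAdd, zero_add] at a b ⊢
      rw [b, a, hg0]; ring
    | succ m =>
      have e1 : Polynomial.X ^ 2 * p (m+2) = p (m+4) + Polynomial.C (g (m+3) + g (m+2)) * p (m+2)
          + Polynomial.C (g (m+2) * g (m+1)) * p m := by
        have a := hrec (m+1)
        have b := hrec (m+2)
        have c := hrec m
        simp only [add_assoc, Nat.reduceAdd] at a b c
        rw [pow_two, mul_assoc, a, mul_add, b, mul_left_comm, c]
        simp only [map_mul, map_add]; ring
      have e : Polynomial.X ^ 4 * (p (m+1+1) * p (m+1+1)) =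
          p (m+4) * p (m+4) + Polynomial.C ((g (m+3) + g (m+2)) ^ 2) * (p (m+2) * p (m+2))
          + Polynomial.C ((g (m+2) * g (m+1)) ^ 2) * (p m * p m)
          + Polynomial.C (2 * (g (m+3) + g (m+2))) * (p (m+4) * p (m+2))
          + Polynomial.C (2 * (g (m+2) * g (m+1))) * (p (m+4) * p m)
          + Polynomial.C (2 * (g (m+3) + g (m+2)) * (g (m+2) * g (m+1))) * (p (m+2) * p m) := by
        calc _ = (Polynomial.X ^ 2 * p (m+2)) * (Polynomial.X ^ 2 * p (m+2)) := by ring_nf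
          _ = _ := by rw [e1]; simp only [map_mul, map_add, map_pow, map_ofNat]; ring
      rw [e]
      simp only [map_add, tfL_C_mul]
      rw [ho (m+4) (m+2) (by omega), ho (m+4) m (by omega), ho (m+2) m (by omega), hh, hh, hh]
      have a := hgm m
      have b := hgm (m+1)
      have c := hgm (m+2)
      have d := hgm (m+3)
      simp only [add_assoc, Nat.reduceAdd] at a b c d ⊢
      rw [d, c, b, a]; ring
  refine ⟨hsq, ?_, ?_, ?_⟩
  · rw [← mul_assoc, hrec, add_mul, mul_assoc, map_add, tfL_C_mul, ho _ _ (by omega),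
      ho _ _ (by omega)]; simp
  · have e : Polynomial.X ^ 2 * (p (n+1) * p (n+1)) = p (n+2) * p (n+2)
        + Polynomial.C (2 * g (n+1)) * (p (n+2) * p n)
        + Polynomial.C (g (n+1) ^ 2) * (p n * p n) := by
      calc _ = (Polynomial.X * p (n+1)) * (Polynomial.X * p (n+1)) := by ring
        _ = _ := by rw [hrec]; simp only [map_mul, map_pow, map_ofNat]; ring
    rw [e, map_add, map_add, tfL_C_mul, tfL_C_mul, ho (n+2) n (by omega), hh, hh]
    have a := hgm n
    have b := hgm (n+1)
    simp only [add_assoc, Nat.reduceAdd] at a b ⊢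
    rw [b, a]; ring
  · have hD := tfL_derivative z (Polynomial.X * (p (n+1) * p (n+1)))
    have e : Polynomial.derivative (Polynomial.X * (p (n+1) * p (n+1))) =
        Polynomial.C (1 + 2 * ((n : ℝ)+1)) * (p (n+1) * p (n+1)) + Polynomial.C 2 * (p (n+1) *
        (Polynomial.X * Polynomial.derivative (p (n+1)) - Polynomial.C ((n:ℝ)+1) * p (n+1))) := by
      simp only [Polynomial.derivative_mul, Polynomial.derivative_X, map_add, map_mul, map_one,
        map_ofNat]
      ring
    have hz : tfL z (p (n+1) * (Polynomial.X * Polynomial.derivative (p (n+1))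
        - Polynomial.C ((n:ℝ)+1) * p (n+1))) = 0 := by
      apply tfL_orth z p hm hd ho (n+1) (n+1) le_rfl
      rw [Polynomial.degree_lt_iff_coeff_zero]
      intro m hmn
      obtain ⟨m, rfl⟩ : ∃ k, m = k + 1 := ⟨m - 1, by omega⟩
      rw [Polynomial.coeff_sub, Polynomial.coeff_X_mul, Polynomial.coeff_derivative,
        Polynomial.coeff_C_mul]
      rcases eq_or_lt_of_le hmn with heq | hlt
      · obtain rfl : n = m := by omega
        ring
      · rw [Polynomial.coeff_eq_zero_of_natDegree_lt (by rw [hd]; exact hlt)]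
        simp
    have e2 : Polynomial.X ^ 3 * (Polynomial.X * (p (n+1) * p (n+1))) =
      Polynomial.X ^ 4 * (p (n+1) * p (n+1)) := by ring
    rw [e, map_add, tfL_C_mul, tfL_C_mul, hz, hh, e2, hX4] at hD
    simp only [Polynomial.eval_mul, Polynomial.eval_X] at hD
    have hsq' : (p (n+1)).eval (-z) * (p (n+1)).eval (-z) =
      (p (n+1)).eval z * (p (n+1)).eval z := by rw [← pow_two, hsq, pow_two]
    rw [hsq'] at hD
    linear_combination -hD


/-- Dynamics of the zeros of the monic orthogonal polynomials for the weight
`e^{-x⁴}` on `[-z, z]`: a differentiable simple-zero trajectory `x_{n,k}(z)`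
satisfies `x'_{n,k}(z) = (x_{n,k}(z)/z)·𝒜_n(z;z)/𝒜_n(x_{n,k}(z);z)`. -/
theorem truncated_freud_zero_dynamics
    (P : ℕ → ℝ → Polynomial ℝ) (γ h : ℕ → ℝ → ℝ)
    (hmonic : ∀ n z, 0 < z → (P n z).Monic)
    (hdeg : ∀ n z, 0 < z → (P n z).natDegree = n)
    (horth : ∀ z, 0 < z → ∀ m n, m ≠ n →
      ∫ x in (-z)..z, (P m z).eval x * (P n z).eval x * Real.exp (-x ^ 4) = 0)
    (hh : ∀ n z, 0 < z → h n z = ∫ x in (-z)..z, ((P n z).eval x) ^ 2 * Real.exp (-x ^ 4))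
    (hhpos : ∀ n z, 0 < z → 0 < h n z)
    (hP0 : ∀ z, 0 < z → P 0 z = 1) (hP1 : ∀ z, 0 < z → P 1 z = Polynomial.X)
    (hrec : ∀ n z, 0 < z →
      Polynomial.X * P (n + 1) z = P (n + 2) z + Polynomial.C (γ (n + 1) z) * P n z)
    (hγ0 : ∀ z, 0 < z → γ 0 z = 0)
    (hγ : ∀ n z, 0 < z → γ (n + 1) z = h (n + 1) z / h n z)
    (hdiffP : ∀ n k, DifferentiableOn ℝ (fun w => (P n w).coeff k) (Set.Ioi (0 : ℝ)))
    (A : ℕ → ℝ → ℝ → ℝ)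
    (hA : ∀ m x w, A m x w =
      γ (m + 1) w * (γ (m + 2) w + γ (m + 1) w + γ m w)
        + γ m w * (γ (m + 1) w + γ m w + γ (m - 1) w)
        + (x ^ 2 - w ^ 2) * (x ^ 2 + γ (m + 1) w + γ m w) - (m : ℝ) / 2 - 1 / 4)
    (n : ℕ) (hn : 1 ≤ n)
    (xk : ℝ → ℝ)
    (hxdiff : ∀ z, 0 < z → DifferentiableAt ℝ xk z)
    (hxin : ∀ z, 0 < z → xk z ∈ Set.Ioo (-z) z)
    (hxzero : ∀ z, 0 < z → (P n z).eval (xk z) = 0)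
    (hxsimple : ∀ z, 0 < z → (Polynomial.derivative (P n z)).eval (xk z) ≠ 0)
    (hAne : ∀ z, 0 < z → A n (xk z) z ≠ 0) :
    ∀ z, 0 < z →
      deriv xk z = (xk z / z) * (A n z z / A n (xk z) z) := by
  intro z hz
  obtain ⟨n, rfl⟩ : ∃ k, n = k + 1 := ⟨n - 1, by omega⟩
  have ho : ∀ s, 0 < s → ∀ m k, m ≠ k → tfL s (P m s * P k s) = 0 := by
    intro s hs m k hmk
    rw [tfL_apply, ← horth s hs m k hmk]
    simp only [Polynomial.eval_mul]
  have hh' : ∀ k, tfL z (P k z * P k z) = h k z := by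
    intro k
    rw [tfL_apply, hh k z hz]
    simp only [Polynomial.eval_mul, pow_two]
  obtain ⟨f1, f2, f3, f4⟩ := tf_fixed z (fun k => P k z) (fun k => γ k z) (fun k => h k z)
    (fun k => hmonic k z hz) (fun k => hdeg k z hz) (ho z hz) hh' (fun k => hhpos k z hz)
    (hP0 z hz) (hP1 z hz) (fun k => hrec k z hz) (hγ0 z hz) (fun k => hγ k z hz) n
  have horth' : ∀ s, 0 < s → ∀ q : Polynomial ℝ, q.degree < ((n + 1 : ℕ) : WithBot ℕ) →
      tfL s (P (n+1) s * q) = 0 := fun s hs q hq =>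
    tfL_orth s (fun k => P k s) (fun k => hmonic k s hs) (fun k => hdeg k s hs) (ho s hs)
      (n+1) (n+1) le_rfl q hq
  obtain ⟨Q, hQ⟩ := Polynomial.dvd_iff_isRoot.mpr (hxzero z hz)
  have hx1 := hxin z hz
  have hx0 := hxsimple z hz
  have hA1 := hAne z hz
  have hz0 := hxzero z hz
  have hhp := hhpos (n+1) z hz
  set x := xk z with hxdef
  set p := P (n+1) z with hp
  have hpdeg : p.degree = ((n+1 : ℕ) : WithBot ℕ) := by
    rw [Polynomial.degree_eq_natDegree (hmonic _ z hz).ne_zero, hdeg _ z hz]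
  have hQdeg : Q.degree < ((n+1 : ℕ) : WithBot ℕ) := by
    have hQ0 : Q ≠ 0 := by
      rintro rfl
      exact (hmonic (n+1) z hz).ne_zero (by rw [← hp, hQ]; simp)
    have : p.natDegree = n + 1 := hdeg _ z hz
    rw [hQ, Polynomial.natDegree_mul (Polynomial.X_sub_C_ne_zero _) hQ0,
      Polynomial.natDegree_X_sub_C] at this
    rw [Polynomial.degree_eq_natDegree hQ0]
    exact_mod_cast (by omega : Q.natDegree < n + 1)
  -- reproducing property
  have hrep : ∀ q : Polynomial ℝ, q.degree < ((n+1 : ℕ) : WithBot ℕ) →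
      tfL z (q * Q) = q.eval x * tfL z Q := by
    intro q hq
    obtain ⟨r, hr⟩ : (Polynomial.X - Polynomial.C x) ∣ (q - Polynomial.C (q.eval x)) := by
      rw [Polynomial.dvd_iff_isRoot]; simp
    have hrd : r.degree < ((n+1 : ℕ) : WithBot ℕ) := by
      by_cases hr0 : r = 0
      · rw [hr0]; simp
      have h1 : (q - Polynomial.C (q.eval x)).natDegree < n + 1 := by
        rw [Polynomial.natDegree_sub_C]
        by_cases hq0 : q = 0
        · simp [hq0]
        · rw [Polynomial.degree_eq_natDegree hq0] at hq
          exact_mod_cast hq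
      rw [hr, Polynomial.natDegree_mul (Polynomial.X_sub_C_ne_zero _) hr0] at h1
      rw [Polynomial.degree_eq_natDegree hr0]
      exact_mod_cast (by omega : r.natDegree < n + 1)
    have e : q * Q = Polynomial.C (q.eval x) * Q + p * r := by
      have : q = Polynomial.C (q.eval x) + (Polynomial.X - Polynomial.C x) * r := by
        rw [← hr]; ring
      conv_lhs => rw [this]
      rw [hQ]; ring
    rw [e, map_add, tfL_C_mul, horth' z hz r hrd, add_zero]
  have hQz : p.eval z = (z - x) * Q.eval z := by rw [hQ]; simp
  have hQmz : p.eval (-z) = (-z - x) * Q.eval (-z) := by rw [hQ]; simp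
  have hzx : z - x ≠ 0 := by linarith [hx1.2] |> fun (h : 0 < z - x) => h.ne'
  have hzx' : z + x ≠ 0 := by linarith [hx1.1] |> fun (h : 0 < z + x) => h.ne'
  have hQz' : Q.eval z = p.eval z / (z - x) := by rw [hQz]; field_simp
  have hQmz' : Q.eval (-z) = - (p.eval (-z) / (z + x)) := by rw [hQmz]; field_simp; ring
  -- the x-derivative
  have hdx : tfL z Q * (Polynomial.derivative p).eval x =
      (p.eval z * Q.eval z - p.eval (-z) * Q.eval (-z)) * Real.exp (-z ^ 4)
      + 4 * (h (n+1) z * (γ (n+2) z + γ (n+1) z + x ^ 2)) := by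
    have h1 := hrep (Polynomial.derivative p)
      (by rw [← hpdeg]; exact Polynomial.degree_derivative_lt (hmonic _ z hz).ne_zero)
    have h2 := tfL_derivative z (p * Q)
    have h3 : tfL z (p * Polynomial.derivative Q) = 0 :=
      horth' z hz _ (lt_of_le_of_lt Polynomial.degree_derivative_le hQdeg)
    have h4 : Polynomial.X ^ 3 * (p * Q) = Polynomial.X ^ 2 * (p * p)
        + Polynomial.C x * (Polynomial.X * (p * p)) + Polynomial.C (x ^ 2) * (p * p)
        + Polynomial.C (x ^ 3) * (p * Q) := by
      simp only [map_pow]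
      linear_combination (-(p * (Polynomial.X ^ 2 + Polynomial.X * Polynomial.C x
        + Polynomial.C x ^ 2))) * hQ
    rw [Polynomial.derivative_mul, map_add, h3, h1, h4, map_add, map_add, map_add, tfL_C_mul,
      tfL_C_mul, tfL_C_mul, f2, f3, hh' (n+1), horth' z hz Q hQdeg] at h2
    simp only [Polynomial.eval_mul] at h2
    linear_combination h2
  -- the z-derivative
  have hcoef : ∀ k, HasDerivAt (fun w => (P (n+1) w).coeff k)
      (deriv (fun w => (P (n+1) w).coeff k) z) z := fun k =>
    ((hdiffP (n+1) k).differentiableAt (Ioi_mem_nhds hz)).hasDerivAt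
  set d : ℕ → ℝ := fun k => deriv (fun w => (P (n+1) w).coeff k) z with hddef
  have hdlead : d (n+1) = 0 := by
    have : (fun w => (P (n+1) w).coeff (n+1)) =ᶠ[nhds z] fun _ => 1 := by
      filter_upwards [Ioi_mem_nhds hz] with w hw
      have := (hmonic (n+1) w hw).coeff_natDegree
      rwa [hdeg _ w hw] at this
    simp only [hddef]
    rw [this.deriv_eq]; simp
  set D : Polynomial ℝ := ∑ k ∈ Finset.range (n+1), Polynomial.C (d k) * Polynomial.X ^ k with hD
  have hDdeg : D.degree < ((n+1 : ℕ) : WithBot ℕ) := by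
    rw [Polynomial.degree_lt_iff_coeff_zero]
    intro m hm
    rw [hD, Polynomial.finsetSum_coeff]
    apply Finset.sum_eq_zero
    intro k hk
    rw [Polynomial.coeff_C_mul_X_pow, if_neg]
    have := Finset.mem_range.mp hk
    omega
  have hexp : ∀ w, 0 < w → P (n+1) w = ∑ k ∈ Finset.range (n+2),
      Polynomial.C ((P (n+1) w).coeff k) * Polynomial.X ^ k := by
    intro w hw
    exact Polynomial.as_sum_range_C_mul_X_pow' _ (by rw [hdeg _ w hw]; omega)
  have hDeval : ∀ F : ℕ → ℝ, ∑ k ∈ Finset.range (n+2), d k * F k =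
      ∑ k ∈ Finset.range (n+1), d k * F k := by
    intro F
    rw [Finset.sum_range_succ, hdlead]; simp
  have hdz : tfL z (D * Q) =
      -((p.eval z * Q.eval z + p.eval (-z) * Q.eval (-z)) * Real.exp (-z ^ 4)) := by
    have hE : (fun s => ∑ k ∈ Finset.range (n+2), (P (n+1) s).coeff k *
        tfL s (Polynomial.X ^ k * Q)) =ᶠ[nhds z] fun _ => 0 := by
      filter_upwards [Ioi_mem_nhds hz] with s hs
      have h1 := horth' s hs Q hQdeg
      rw [hexp s hs, Finset.sum_mul, map_sum] at h1
      rw [← h1]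
      refine Finset.sum_congr rfl fun k _ => ?_
      rw [mul_assoc, tfL_C_mul]
    have h2 : HasDerivAt (fun s => ∑ k ∈ Finset.range (n+2), (P (n+1) s).coeff k *
        tfL s (Polynomial.X ^ k * Q)) _ z :=
      HasDerivAt.fun_sum fun k _ => (hcoef k).mul (tfL_hasDerivAt z (Polynomial.X ^ k * Q))
    have h3 := h2.unique ((hasDerivAt_const z (0:ℝ)).congr_of_eventuallyEq hE)
    rw [Finset.sum_add_distrib] at h3
    have h4 := hDeval (fun k => tfL z (Polynomial.X ^ k * Q))
    simp only [hddef] at h4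
    rw [h4] at h3
    have h5 : tfL z (D * Q) = ∑ k ∈ Finset.range (n+1), d k * tfL z (Polynomial.X ^ k * Q) := by
      rw [hD, Finset.sum_mul, map_sum]
      refine Finset.sum_congr rfl fun k _ => ?_
      rw [mul_assoc, tfL_C_mul]
    have ev : ∀ y, p.eval y = ∑ k ∈ Finset.range (n+2), p.coeff k * y ^ k := by
      intro y
      conv_lhs => rw [hp, hexp z hz]
      simp [Polynomial.eval_finsetSum]
      rfl
    have h6 : ∑ k ∈ Finset.range (n+2), (P (n+1) z).coeff k *
        ((Polynomial.eval z (Polynomial.X ^ k * Q) + Polynomial.eval (-z) (Polynomial.X ^ k * Q))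
          * Real.exp (-z ^ 4)) =
        (p.eval z * Q.eval z + p.eval (-z) * Q.eval (-z)) * Real.exp (-z ^ 4) := by
      rw [ev z, ev (-z), Finset.sum_mul, Finset.sum_mul, ← Finset.sum_add_distrib, Finset.sum_mul]
      refine Finset.sum_congr rfl fun k _ => ?_
      simp only [Polynomial.eval_mul, Polynomial.eval_pow, Polynomial.eval_X]
      ring
    rw [h6] at h3
    rw [h5]
    simp only [hddef]
    linarith
  rw [hrep D hDdeg] at hdz
  -- implicit differentiation
  have himp : D.eval x + (Polynomial.derivative p).eval x * deriv xk z = 0 := by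
    have hE : (fun s => ∑ k ∈ Finset.range (n+2), (P (n+1) s).coeff k * (xk s) ^ k)
        =ᶠ[nhds z] fun _ => 0 := by
      filter_upwards [Ioi_mem_nhds hz] with s hs
      have h1 := hxzero s hs
      rw [hexp s hs] at h1
      rw [← h1]
      simp [Polynomial.eval_finsetSum]
    have h2 : HasDerivAt (fun s => ∑ k ∈ Finset.range (n+2), (P (n+1) s).coeff k * (xk s) ^ k)
        _ z :=
      HasDerivAt.fun_sum fun k _ => (hcoef k).mul ((hxdiff z hz).hasDerivAt.fun_pow k)
    have h3 := h2.unique ((hasDerivAt_const z (0:ℝ)).congr_of_eventuallyEq hE)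
    rw [Finset.sum_add_distrib] at h3
    have h4 := hDeval (fun k => xk z ^ k)
    simp only [hddef] at h4
    rw [h4] at h3
    have h5 : D.eval x = ∑ k ∈ Finset.range (n+1), d k * xk z ^ k := by
      rw [hD]; simp [Polynomial.eval_finsetSum, hxdef]
    have h6 : (Polynomial.derivative p).eval x * deriv xk z = ∑ k ∈ Finset.range (n+2),
        (P (n+1) z).coeff k * ((k:ℝ) * xk z ^ (k-1) * deriv xk z) := by
      conv_lhs => rw [hp, hexp z hz]
      simp only [Polynomial.derivative_sum, Polynomial.eval_finsetSum, Finset.sum_mul]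
      refine Finset.sum_congr rfl fun k _ => ?_
      simp [Polynomial.derivative_X_pow, hxdef]
      ring
    rw [h5, h6]
    simp only [hddef]
    exact h3
  -- conclusion
  have hAz : A (n+1) z z = -(2 * z * p.eval z ^ 2 * Real.exp (-z ^ 4)) / (4 * h (n+1) z) := by
    rw [f4, hA]
    field_simp
    push_cast
    simp only [Nat.add_sub_cancel, add_assoc, Nat.reduceAdd]
    ring
  have hAx : A (n+1) x z = A (n+1) z z + (x ^ 2 - z ^ 2) * (x ^ 2 + γ (n+2) z + γ (n+1) z) := by
    rw [hA, hA]; ring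
  have f1' : p.eval (-z) * p.eval (-z) = p.eval z ^ 2 := by rw [← pow_two, f1]
  set W := p.eval z ^ 2 * Real.exp (-z ^ 4) with hW
  have hdx' : tfL z Q * (Polynomial.derivative p).eval x * ((z - x) * (z + x)) =
      -(4 * h (n+1) z * A (n+1) x z) := by
    have hAz' : 4 * h (n+1) z * A (n+1) z z = -(2 * z * W) := by
      rw [hAz, hW]; field_simp
    have : (p.eval z * Q.eval z - p.eval (-z) * Q.eval (-z)) * Real.exp (-z ^ 4) *
        ((z - x) * (z + x)) = 2 * z * W := by
      rw [hQz', hQmz', hW]; field_simp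
      linear_combination (z - x) * f1'
    rw [hdx, hAx]
    linear_combination this + hAz'
  have hdz' : D.eval x * tfL z Q * ((z - x) * (z + x)) = -(2 * x * W) := by
    rw [hdz, hQz', hQmz', hW]; field_simp
    linear_combination (z - x) * f1'
  have hfin : 4 * h (n+1) z * A (n+1) x z * deriv xk z = -(2 * x * W) := by
    linear_combination hdz' + deriv xk z * hdx' - tfL z Q * ((z - x) * (z + x)) * himp
  have hAz2 : A (n+1) z z = -(2 * z * W) / (4 * h (n+1) z) := by
    rw [hAz, hW]; ring
  rw [hAz2]
  field_simp
  linear_combination hfin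
end
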